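/- The function φ^c(λ, η) is (jointly) differentiable at every (λ, η) ∈ ℝ^n × ℝ^n, with derivative given by the linear map (Δλ, Δη) ↦ ⟨η − cA(λ − ω̂), Δλ⟩ + ⟨λ − ω̂, Δη⟩, where ω̂ = ω̂(λ, η) ∈ K is the unique maximizer over ω ∈ K of ⟨η, λ − ω⟩ − (c/2)⟨λ − ω, A(λ − ω)⟩; in particular ∇_λ φ^c(λ, η) = η − cA(λ − ω̂) and ∇_η φ^c(λ, η) = λ − ω̂. -/

import Mathlib

open RealInnerProductSpace

/-!
Expanding the square turns the objective into
`⟪η, λ⟫ - c / 2 * ⟪λ, A λ⟫ + (⟪c A λ - η, ω⟫ - q ω)` with `q ω = c / 2 * ⟪ω, A ω⟫`, so that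
`φ (λ, η) = ⟪η, λ⟫ - c / 2 * ⟪λ, A λ⟫ + q* (c A λ - η)`, where `q*` is the Fenchel conjugate of `q`
restricted to `K`. Since `q` is strongly convex, the objective of `q*` falls off quadratically away
from its maximizer `ω̂`; this absorbs the displacement of the maximizer under a perturbation of the
functional, so `q*` is Fréchet differentiable with derivative the evaluation at `ω̂`. The formula
for the derivative of `φ` is then the chain rule.
-/

open Filter Topology Asymptotics

section StrongConvexity

variable {E : Type*} [NormedAddCommGroup E] [NormedSpace ℝ E] {K : Set E} {m : ℝ} {f : E → ℝ}
  {w z : E}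

lemma add_modulus_le_of_isMinOn {r : ℝ → ℝ} (hf : UniformConvexOn K r f) (hw : w ∈ K)
    (hmin : IsMinOn f K w) (hz : z ∈ K) : f w + r ‖z - w‖ ≤ f z := by
  have hchord : ∀ t ∈ Set.Ioo (0 : ℝ) 1, f w + (1 - t) * r ‖z - w‖ ≤ f z := by
    rintro t ⟨ht0, ht1⟩
    have hmem : t • z + (1 - t) • w ∈ K :=
      hf.1 hz hw ht0.le (sub_nonneg.2 ht1.le) (add_sub_cancel t 1)
    have hle : f w ≤ t * f z + (1 - t) * f w - t * (1 - t) * r ‖z - w‖ :=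
      (hmin hmem).trans (hf.2 hz hw ht0.le (sub_nonneg.2 ht1.le) (add_sub_cancel t 1))
    refine le_of_mul_le_mul_left ?_ ht0
    linarith
  have hlim : Tendsto (fun t : ℝ => f w + (1 - t) * r ‖z - w‖) (𝓝[>] 0)
      (𝓝 (f w + r ‖z - w‖)) :=
    tendsto_nhdsWithin_of_tendsto_nhds (Continuous.tendsto' (by fun_prop) _ _ (by simp))
  exact le_of_tendsto hlim (mem_of_superset (Ioo_mem_nhdsGT one_pos) hchord)

/-- The Fenchel conjugate of `f + ι_K`, where `ι_K` is the convex indicator function of `K`. It is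
`0` by the convention for `sSup` at functionals where the supremum is infinite. -/
noncomputable def fenchelConjugateOn (K : Set E) (f : E → ℝ) (ξ : StrongDual ℝ E) : ℝ :=
  sSup ((fun x => ξ x - f x) '' K)

lemma fenchelConjugateOn_eq_of_isMaxOn {ξ : StrongDual ℝ E} (hw : w ∈ K)
    (hmax : IsMaxOn (fun x => ξ x - f x) K w) : fenchelConjugateOn K f ξ = ξ w - f w :=
  IsGreatest.csSup_eq ⟨Set.mem_image_of_mem _ hw, Set.forall_mem_image.2 hmax⟩

variable {ξ : StrongDual ℝ E}

lemma apply_sub_add_sq_le_of_isMaxOn (hf : StrongConvexOn K m f) (hw : w ∈ K)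
    (hmax : IsMaxOn (fun x => ξ x - f x) K w) (hz : z ∈ K) :
    ξ z - f z + m / 2 * ‖z - w‖ ^ 2 ≤ ξ w - f w := by
  have hconcave : UniformConcaveOn K 0 ξ :=
    (ξ.toLinearMap.concaveOn hf.1).uniformConcaveOn_zero
  have hmin : IsMinOn (f - ⇑ξ) K w := by
    simpa only [neg_sub] using! hmax.neg
  have h := add_modulus_le_of_isMinOn (UniformConvexOn.sub hf hconcave) hw hmin hz
  simp only [Pi.add_apply, Pi.sub_apply, Pi.zero_apply, add_zero] at h
  linarith

lemma apply_add_sub_le_of_isMaxOn (hf : StrongConvexOn K m f) (hm : 0 < m) (hw : w ∈ K)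
    (hmax : IsMaxOn (fun x => ξ x - f x) K w) (δ : StrongDual ℝ E) (hz : z ∈ K) :
    (ξ + δ) z - f z ≤ ξ w - f w + δ w + ‖δ‖ ^ 2 / (2 * m) := by
  have hgrowth := apply_sub_add_sq_le_of_isMaxOn hf hw hmax hz
  have hδ : δ z - δ w ≤ ‖δ‖ * ‖z - w‖ := by
    rw [← map_sub]
    exact (le_abs_self _).trans (δ.le_opNorm _)
  have hyoung : ‖δ‖ * ‖z - w‖ ≤ m / 2 * ‖z - w‖ ^ 2 + ‖δ‖ ^ 2 / (2 * m) := by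
    have hsq : m / 2 * ‖z - w‖ ^ 2 + ‖δ‖ ^ 2 / (2 * m) - ‖δ‖ * ‖z - w‖ =
        (m * ‖z - w‖ - ‖δ‖) ^ 2 / (2 * m) := by
      field_simp
      ring
    rw [← sub_nonneg, hsq]
    positivity
  rw [add_apply]
  linarith

lemma isLUB_fenchelConjugateOn (hf : StrongConvexOn K m f) (hm : 0 < m) (hw : w ∈ K)
    (hmax : IsMaxOn (fun x => ξ x - f x) K w) (η : StrongDual ℝ E) :
    IsLUB ((fun x => η x - f x) '' K) (fenchelConjugateOn K f η) := by
  refine isLUB_csSup (Set.Nonempty.image _ ⟨w, hw⟩)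
    ⟨ξ w - f w + (η - ξ) w + ‖η - ξ‖ ^ 2 / (2 * m), Set.forall_mem_image.2 fun z hz => ?_⟩
  simpa only [add_sub_cancel] using apply_add_sub_le_of_isMaxOn hf hm hw hmax (η - ξ) hz

theorem hasFDerivAt_fenchelConjugateOn (hf : StrongConvexOn K m f) (hm : 0 < m) (hw : w ∈ K)
    (hmax : IsMaxOn (fun x => ξ x - f x) K w) :
    HasFDerivAt (fenchelConjugateOn K f) (ContinuousLinearMap.apply ℝ ℝ w) ξ := by
  have hremainder : ∀ δ : StrongDual ℝ E,
      ‖fenchelConjugateOn K f (ξ + δ) - fenchelConjugateOn K f ξ - δ w‖ ≤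
        1 / (2 * m) * ‖‖δ‖ ^ 2‖ := by
    intro δ
    have hlub := isLUB_fenchelConjugateOn hf hm hw hmax (ξ + δ)
    have hlower : (ξ + δ) w - f w ≤ fenchelConjugateOn K f (ξ + δ) :=
      hlub.1 (Set.mem_image_of_mem _ hw)
    have hupper : fenchelConjugateOn K f (ξ + δ) ≤ ξ w - f w + δ w + ‖δ‖ ^ 2 / (2 * m) :=
      hlub.2 (Set.forall_mem_image.2 fun z hz => apply_add_sub_le_of_isMaxOn hf hm hw hmax δ hz)
    rw [add_apply] at hlower
    rw [fenchelConjugateOn_eq_of_isMaxOn hw hmax, norm_pow, norm_norm, one_div_mul_eq_div,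
      Real.norm_of_nonneg (by linarith)]
    linarith
  rw [hasFDerivAt_iff_isLittleO_nhds_zero]
  exact (IsBigO.of_bound _ (Eventually.of_forall hremainder)).trans_isLittleO
    (isLittleO_norm_pow_id one_lt_two)

end StrongConvexity

section RegularizedGap

variable {E : Type*} [NormedAddCommGroup E] [InnerProductSpace ℝ E] {K : Set E} {c α : ℝ}

lemma strongConvexOn_inner_map_self (hK : Convex ℝ K) (hc : 0 ≤ c) {T : E →ₗ[ℝ] E}
    (hT : ∀ x, α * ‖x‖ ^ 2 ≤ ⟪x, T x⟫) :
    StrongConvexOn K (c * α) fun x => c / 2 * ⟪x, T x⟫ := by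
  refine ⟨hK, fun x _ y _ a b ha hb hab => ?_⟩
  have hconvexity_defect : a * ⟪x, T x⟫ + b * ⟪y, T y⟫ - ⟪a • x + b • y, T (a • x + b • y)⟫ =
      a * b * ⟪x - y, T (x - y)⟫ := by
    obtain rfl := eq_sub_of_add_eq' hab
    simp only [map_add, map_sub, map_smul, inner_add_left, inner_add_right, inner_sub_left,
      inner_sub_right, real_inner_smul_left, real_inner_smul_right]
    ring
  have hcoercive : c / 2 * (a * b) * (α * ‖x - y‖ ^ 2) ≤
      c / 2 * (a * b) * ⟪x - y, T (x - y)⟫ := by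
    gcongr
    exact hT _
  simp only [smul_eq_mul]
  linear_combination hcoercive - c / 2 * hconvexity_defect

/-- The objective `ω ↦ ⟪η, l - ω⟫ - c / 2 * ⟪l - ω, T (l - ω)⟫` whose maximum over `K` is the
regularized gap function `φ^c (l, η)`. -/
noncomputable def regularizedGapObjective (c : ℝ) (T : E →ₗ[ℝ] E) (l η ω : E) : ℝ :=
  ⟪η, l - ω⟫ - c / 2 * ⟪l - ω, T (l - ω)⟫

lemma regularizedGapObjective_eq_const_add {T : E →ₗ[ℝ] E} (hT : T.IsSymmetric) (l η : E) :
    regularizedGapObjective c T l η = fun ω =>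
      ⟪η, l⟫ - c / 2 * ⟪l, T l⟫ + (innerSL ℝ (c • T l - η) ω - c / 2 * ⟪ω, T ω⟫) := by
  ext ω
  have hcross : ⟪l, T ω⟫ = ⟪T l, ω⟫ := (hT l ω).symm
  have hcross' : ⟪ω, T l⟫ = ⟪T l, ω⟫ := real_inner_comm _ _
  rw [regularizedGapObjective, innerSL_apply_apply]
  simp only [map_sub, inner_sub_left, inner_sub_right, real_inner_smul_left, hcross, hcross']
  ring

lemma isMaxOn_regularizedGapObjective_iff {T : E →ₗ[ℝ] E} (hT : T.IsSymmetric) {l η w : E} :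
    IsMaxOn (regularizedGapObjective c T l η) K w ↔
      IsMaxOn (fun ω => innerSL ℝ (c • T l - η) ω - c / 2 * ⟪ω, T ω⟫) K w := by
  simp only [regularizedGapObjective_eq_const_add hT, isMaxOn_iff, add_le_add_iff_left]

lemma isLUB_image_regularizedGapObjective_iff {T : E →ₗ[ℝ] E} (hT : T.IsSymmetric) {l η : E}
    {s : ℝ} :
    IsLUB (regularizedGapObjective c T l η '' K) (⟪η, l⟫ - c / 2 * ⟪l, T l⟫ + s) ↔
      IsLUB ((fun ω => innerSL ℝ (c • T l - η) ω - c / 2 * ⟪ω, T ω⟫) '' K) s := by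
  rw [regularizedGapObjective_eq_const_add hT,
    ← (OrderIso.addLeft (⟪η, l⟫ - c / 2 * ⟪l, T l⟫)).isLUB_image' (x := s), Set.image_image]
  rfl

lemma hasFDerivAt_inner_sub_inner_map_self {T : E →L[ℝ] E} (hT : T.toLinearMap.IsSymmetric)
    (l η : E) :
    HasFDerivAt (fun p : E × E => ⟪p.2, p.1⟫ - c / 2 * ⟪p.1, T p.1⟫)
      ((innerSL ℝ (η - c • T l)).comp (ContinuousLinearMap.fst ℝ E E) +
        (innerSL ℝ l).comp (ContinuousLinearMap.snd ℝ E E)) (l, η) := by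
  have hfst : HasFDerivAt Prod.fst (ContinuousLinearMap.fst ℝ E E) (l, η) := hasFDerivAt_fst
  have hsnd : HasFDerivAt Prod.snd (ContinuousLinearMap.snd ℝ E E) (l, η) := hasFDerivAt_snd
  refine ((hsnd.inner ℝ hfst).sub ((hfst.inner ℝ (T.hasFDerivAt.comp _ hfst)).const_mul
    (c / 2))).congr_fderiv (ContinuousLinearMap.ext fun ⟨x, y⟩ => ?_)
  have hcross : ⟪l, T x⟫ = ⟪T l, x⟫ := (hT l x).symm
  change ⟪η, x⟫ + ⟪y, l⟫ - c / 2 * (⟪l, T x⟫ + ⟪x, T l⟫) = ⟪η - c • T l, x⟫ + ⟪l, y⟫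
  rw [hcross, real_inner_comm (T l) x, real_inner_comm l y, inner_sub_left, real_inner_smul_left]
  ring

theorem stmt_9_general (hK : Convex ℝ K) (hc : 0 < c) (hα : 0 < α) {T : E →L[ℝ] E}
    (hsymm : T.toLinearMap.IsSymmetric) (hT : ∀ x, α * ‖x‖ ^ 2 ≤ ⟪x, T x⟫) {φ : E → E → ℝ}
    (hφ : ∀ l η, IsLUB (regularizedGapObjective c T l η '' K) (φ l η))
    {l η w : E} (hw : w ∈ K) (hmax : IsMaxOn (regularizedGapObjective c T l η) K w) :
    HasFDerivAt (fun p : E × E => φ p.1 p.2)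
      ((innerSL ℝ (η - c • T (l - w))).comp (ContinuousLinearMap.fst ℝ E E) +
        (innerSL ℝ (l - w)).comp (ContinuousLinearMap.snd ℝ E E)) (l, η) := by
  set q : E → ℝ := fun x => c / 2 * ⟪x, T x⟫
  set L : E × E →L[ℝ] StrongDual ℝ E := (innerSL ℝ).comp
    (c • T.comp (ContinuousLinearMap.fst ℝ E E) - ContinuousLinearMap.snd ℝ E E)
  have hq : StrongConvexOn K (c * α) q := strongConvexOn_inner_map_self hK hc.le hT
  have hw_conj : IsMaxOn (fun x => L (l, η) x - q x) K w :=
    (isMaxOn_regularizedGapObjective_iff hsymm).1 hmax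
  have hφ_eq (p : E × E) :
      φ p.1 p.2 = ⟪p.2, p.1⟫ - c / 2 * ⟪p.1, T p.1⟫ + fenchelConjugateOn K q (L p) :=
    (hφ p.1 p.2).unique <| (isLUB_image_regularizedGapObjective_iff hsymm).2 <|
      isLUB_fenchelConjugateOn hq (mul_pos hc hα) hw hw_conj (L p)
  have hconj : HasFDerivAt (fun p => fenchelConjugateOn K q (L p))
      ((ContinuousLinearMap.apply ℝ ℝ w).comp L) (l, η) :=
    (hasFDerivAt_fenchelConjugateOn hq (mul_pos hc hα) hw hw_conj).comp _ L.hasFDerivAt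
  simp only [hφ_eq]
  refine ((hasFDerivAt_inner_sub_inner_map_self hsymm l η).add hconj).congr_fderiv
    (ContinuousLinearMap.ext fun ⟨x, y⟩ => ?_)
  have hcross : ⟪T w, x⟫ = ⟪T x, w⟫ := (hsymm w x).trans (real_inner_comm _ _)
  change ⟪η - c • T l, x⟫ + ⟪l, y⟫ + ⟪c • T x - y, w⟫ = ⟪η - c • T (l - w), x⟫ + ⟪l - w, y⟫
  simp only [map_sub, inner_sub_left, real_inner_smul_left, hcross, real_inner_comm y w]
  ring

end RegularizedGap

open scoped MatrixOrder in
lemma exists_pos_mul_norm_sq_le_inner_toEuclideanLin {ι : Type*} [Fintype ι] [DecidableEq ι]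
    {A : Matrix ι ι ℝ} (hA : A.PosDef) :
    ∃ α > 0, ∀ x, α * ‖x‖ ^ 2 ≤ ⟪x, A.toEuclideanLin x⟫ := by
  cases isEmpty_or_nonempty ι
  · exact ⟨1, one_pos, fun x => by simp [Subsingleton.elim x 0]⟩
  obtain ⟨α, hα, hαA⟩ := (CFC.exists_pos_algebraMap_le_iff hA.isHermitian).2
    fun _ h => hA.isStrictlyPositive.spectrum_pos h
  refine ⟨α, hα, fun x => ?_⟩
  have hdiff : 0 ≤ ⟪x, (A - algebraMap ℝ _ α).toEuclideanLin x⟫ :=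
    (Matrix.isPositive_toEuclideanLin_iff.2 (Matrix.le_iff.1 hαA)).inner_nonneg_right x
  have hscalar : (algebraMap ℝ (Matrix ι ι ℝ) α).toEuclideanLin x = α • x := by
    simp [Algebra.algebraMap_eq_smul_one]
  rwa [map_sub, LinearMap.sub_apply, hscalar, inner_sub_right, real_inner_smul_right,
    real_inner_self_eq_norm_sq, sub_nonneg] at hdiff

/-- φ^c(λ, η) is jointly differentiable, with derivative
(Δλ, Δη) ↦ ⟨η − cA(λ − ω̂), Δλ⟩ + ⟨λ − ω̂, Δη⟩ at every (λ, η); in particular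
∇_λ φ^c = η − cA(λ − ω̂) and ∇_η φ^c = λ − ω̂. -/
theorem stmt_9 (n : ℕ) (hn : 1 ≤ n) (K : Set (EuclideanSpace ℝ (Fin n)))
    (hKne : K.Nonempty) (hKcl : IsClosed K) (hKcv : Convex ℝ K)
    (c : ℝ) (hc : 0 < c) (A : Matrix (Fin n) (Fin n) ℝ) (hA : A.PosDef)
    (φ : EuclideanSpace ℝ (Fin n) → EuclideanSpace ℝ (Fin n) → ℝ)
    (ωhat : EuclideanSpace ℝ (Fin n) → EuclideanSpace ℝ (Fin n) → EuclideanSpace ℝ (Fin n))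
    (hωhatK : ∀ l η, ωhat l η ∈ K)
    (hωhatmax : ∀ l η, ∀ ω ∈ K,
      ⟪η, l - ω⟫ - c / 2 * ⟪l - ω, Matrix.toEuclideanLin A (l - ω)⟫ ≤
        ⟪η, l - ωhat l η⟫ -
          c / 2 * ⟪l - ωhat l η, Matrix.toEuclideanLin A (l - ωhat l η)⟫)
    (hφ : ∀ l η, IsGreatest
      ((fun ω => ⟪η, l - ω⟫ - c / 2 * ⟪l - ω, Matrix.toEuclideanLin A (l - ω)⟫) '' K)
      (φ l η)) :
    ∀ l η, HasFDerivAt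
      (fun p : EuclideanSpace ℝ (Fin n) × EuclideanSpace ℝ (Fin n) => φ p.1 p.2)
      ((innerSL ℝ (η - c • Matrix.toEuclideanLin A (l - ωhat l η))).comp
          (ContinuousLinearMap.fst ℝ (EuclideanSpace ℝ (Fin n)) (EuclideanSpace ℝ (Fin n))) +
        (innerSL ℝ (l - ωhat l η)).comp
          (ContinuousLinearMap.snd ℝ (EuclideanSpace ℝ (Fin n)) (EuclideanSpace ℝ (Fin n))))
      (l, η) := by
  obtain ⟨α, hα, hcoercive⟩ := exists_pos_mul_norm_sq_le_inner_toEuclideanLin hA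
  exact fun l η => stmt_9_general (T := Matrix.toEuclideanCLM (𝕜 := ℝ) A) hKcv hc hα
    (Matrix.isSymmetric_toEuclideanLin_iff.2 hA.isHermitian) hcoercive
    (fun l η => (hφ l η).isLUB) (hωhatK l η) (hωhatmax l η)
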